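/- Let a, b be real d×d matrices, t > 0, and q_s := ∫₀ˢ exp(ub) aᵀa exp(ubᵀ) du for s ∈ [0, t]. Let v be an invertible real symmetric d×d matrix. Then the following are equivalent: (i) det(I_d − 2·(s/t)·q_t·v) ≠ 0 for all s ∈ [0, t]; (ii) det(I_d − 2 q_s v) ≠ 0 for all s ∈ [0, t]. -/

import Mathlib

open Matrix MeasureTheory

/-- The matrix `q_s := ∫₀ˢ exp(ub) aᵀa exp(ubᵀ) du` (Bochner integral, computed entrywise). -/
noncomputable def qMat {d : ℕ} (a b : Matrix (Fin d) (Fin d) ℝ) (s : ℝ) :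
    Matrix (Fin d) (Fin d) ℝ :=
  Matrix.of fun i j =>
    ∫ u in (0:ℝ)..s,
      (NormedSpace.exp (u • b) * (aᵀ * a) * NormedSpace.exp (u • bᵀ)) i j

/-!
Call `Q` good if `det (1 - r Q w) ≠ 0` for all `r ∈ [0, 1]`, where `w = 2v`. Whatever the
factorization `Q = S Sᴴ`, Sylvester's identity `det (1 - S Sᴴ w) = det (1 - Sᴴ w S)` shows that `Q`
is good if and only if `1 - Sᴴ w S` is positive definite. The freedom in the choice of `S` gives
monotonicity: if `0 ≤ P = S Sᴴ ≤ Q` and `Q - P = D Dᴴ`, then `Q = [S D] [S D]ᴴ`, and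
`1 - Sᴴ w S` is a diagonal block of `1 - [S D]ᴴ w [S D]`, so `P` is good when `Q` is. Conversely,
if `det (1 - q_s w)` never vanishes, then `1 - √q_s w √q_s` is a path of invertible Hermitian
matrices starting at `1`, so it stays positive definite and `q_t` is good.
-/

section MatrixPaths

open scoped ComplexOrder MatrixOrder Matrix.Norms.L2Operator

variable {m n 𝕜 : Type*} [RCLike 𝕜]

theorem isClosed_setOf_posSemidef [Finite n] : IsClosed {A : Matrix n n 𝕜 | A.PosSemidef} := by
  have := Fintype.ofFinite n
  simp only [posSemidef_iff_dotProduct_mulVec, Set.ofPred_and, Set.ofPred_forall]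
  refine (isClosed_eq (by fun_prop) continuous_id).inter (isClosed_iInter fun x => ?_)
  exact isClosed_le continuous_const (by fun_prop)

variable [Fintype n]

theorem isOpen_setOf_forall_re_dotProduct_mulVec_pos :
    IsOpen {A : Matrix n n 𝕜 | ∀ x ≠ 0, 0 < RCLike.re (star x ⬝ᵥ (A *ᵥ x))} := by
  have h_sphere : {A : Matrix n n 𝕜 | ∀ x ≠ 0, 0 < RCLike.re (star x ⬝ᵥ (A *ᵥ x))} =
      {A | ∀ x ∈ Metric.sphere (0 : n → 𝕜) 1, 0 < RCLike.re (star x ⬝ᵥ (A *ᵥ x))} := by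
    ext A
    refine ⟨fun h x hx => h x (ne_zero_of_mem_unit_sphere ⟨x, hx⟩), fun h x hx => ?_⟩
    have h_inv_pos : 0 < ‖x‖⁻¹ := by positivity
    have h_unit := h (‖x‖⁻¹ • x) (by simp [norm_smul, hx])
    simpa [mulVec_smul, RCLike.smul_re, h_inv_pos] using h_unit
  rw [h_sphere, isOpen_iff_mem_nhds]
  intro A hA
  refine (isCompact_sphere 0 1).eventually_forall_of_forall_eventually fun x hx => ?_
  have h_cont : Continuous fun p : Matrix n n 𝕜 × (n → 𝕜) =>
      RCLike.re (star p.2 ⬝ᵥ (p.1 *ᵥ p.2)) := by fun_prop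
  exact (h_cont.tendsto (A, x)).eventually_const_lt (hA x hx)

theorem posSemidef_integral {α : Type*} [MeasurableSpace α] [DecidableEq n] {μ : Measure α}
    {f : α → Matrix n n ℝ} (hf : ∀ x, (f x).PosSemidef) : (∫ x, f x ∂μ).PosSemidef := by
  have : ClosedIciTopology (Matrix n n ℝ) :=
    ⟨fun A => isClosed_setOf_posSemidef.preimage (continuous_sub_right A)⟩
  exact (integral_nonneg fun x => (hf x).nonneg).posSemidef

theorem monotone_intervalIntegral_of_posSemidef [DecidableEq n] {μ : Measure ℝ}
    {f : ℝ → Matrix n n ℝ} (hf_int : ∀ a b, IntervalIntegrable f μ a b)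
    (hf : ∀ u, (f u).PosSemidef) (a : ℝ) : Monotone fun s => ∫ u in a..s, f u ∂μ := by
  intro s s' hs
  rw [le_iff, intervalIntegral.integral_interval_sub_left (hf_int a s') (hf_int a s),
    intervalIntegral.integral_of_le hs]
  exact posSemidef_integral hf

variable [DecidableEq n]

theorem posDef_of_mem_isPreconnected {S : Set (Matrix n n 𝕜)} (hS : IsPreconnected S)
    (hS_herm : ∀ A ∈ S, A.IsHermitian) (hS_det : ∀ A ∈ S, A.det ≠ 0)
    {A₀ A : Matrix n n 𝕜} (hA₀S : A₀ ∈ S) (hA₀ : A₀.PosDef) (hA : A ∈ S) : A.PosDef := by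
  have h_posSemidef_iff : ∀ B ∈ S,
      B.PosSemidef ↔ ∀ x ≠ 0, 0 < RCLike.re (star x ⬝ᵥ (B *ᵥ x)) := fun B hB => by
    refine ⟨fun h x hx => (h.posDef_iff_det_ne_zero.2 (hS_det B hB)).re_dotProduct_pos hx,
      fun h => .of_dotProduct_mulVec_nonneg (hS_herm B hB) fun x => ?_⟩
    rcases eq_or_ne x 0 with rfl | hx
    · simp
    · exact RCLike.nonneg_iff.2 ⟨(h x hx).le, (hS_herm B hB).im_star_dotProduct_mulVec_self x⟩
  have h_dichotomy := isPreconnected_iff_subset_of_disjoint_closed.1 hS _ _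
    isClosed_setOf_posSemidef isOpen_setOf_forall_re_dotProduct_mulVec_pos.isClosed_compl
    (fun B hB => (em _).imp_right (mt (h_posSemidef_iff B hB).2))
    (Set.eq_empty_of_forall_notMem fun B hB => hB.2.2 ((h_posSemidef_iff B hB.1).1 hB.2.1))
  have h_subset : S ⊆ {B | B.PosSemidef} :=
    h_dichotomy.resolve_right fun h => h hA₀S ((h_posSemidef_iff A₀ hA₀S).1 hA₀.posSemidef)
  exact (h_subset hA).posDef_iff_det_ne_zero.2 (hS_det A hA)

theorem posDef_one_sub_iff_forall_det_ne_zero {A : Matrix n n 𝕜} (hA : A.IsHermitian) :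
    (1 - A).PosDef ↔ ∀ r ∈ Set.Icc (0 : ℝ) 1, (1 - r • A).det ≠ 0 := by
  refine ⟨fun h r hr => ?_, fun h => ?_⟩
  · have h_convex : 1 - r • A = (1 - r) • (1 : Matrix n n 𝕜) + r • (1 - A) := by module
    have h_posDef : (1 - r • A).PosDef := by
      rcases hr.2.eq_or_lt with rfl | hr_lt
      · simpa using h
      · rw [h_convex]
        exact (PosDef.one.smul (sub_pos.2 hr_lt)).add_posSemidef (h.posSemidef.smul hr.1)
    exact h_posDef.det_pos.ne'
  · have h_path : IsPreconnected ((fun r : ℝ => 1 - r • A) '' Set.Icc 0 1) :=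
      isPreconnected_Icc.image _ (by fun_prop)
    refine posDef_of_mem_isPreconnected h_path ?_ ?_ (A₀ := 1) ⟨0, by simp⟩ .one ⟨1, by simp⟩
    · rintro _ ⟨r, -, rfl⟩
      exact isHermitian_one.sub (hA.smul (.all r))
    · rintro _ ⟨r, hr, rfl⟩
      exact h r hr

theorem posDef_one_sub_conjTranspose_mul_mul_iff [Fintype m] [DecidableEq m] {v : Matrix n n 𝕜}
    (hv : v.IsHermitian) (S : Matrix n m 𝕜) :
    (1 - Sᴴ * v * S).PosDef ↔ ∀ r ∈ Set.Icc (0 : ℝ) 1, (1 - r • (S * Sᴴ * v)).det ≠ 0 := by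
  rw [posDef_one_sub_iff_forall_det_ne_zero (isHermitian_conjTranspose_mul_mul S hv)]
  refine forall₂_congr fun r _ => not_congr ?_
  rw [Matrix.mul_assoc S, ← Matrix.mul_smul, det_one_sub_mul_comm, Matrix.smul_mul]

theorem det_one_sub_mul_ne_zero_of_le {v P Q : Matrix n n 𝕜} (hv : v.IsHermitian)
    (hP : 0 ≤ P) (hPQ : P ≤ Q)
    (hQ : ∀ r ∈ Set.Icc (0 : ℝ) 1, (1 - r • (Q * v)).det ≠ 0) : (1 - P * v).det ≠ 0 := by
  obtain ⟨S, rfl⟩ := CStarAlgebra.nonneg_iff_eq_mul_star_self.1 hP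
  obtain ⟨D, hD⟩ := CStarAlgebra.nonneg_iff_eq_mul_star_self.1 (sub_nonneg.2 hPQ)
  simp only [star_eq_conjTranspose] at hD ⊢
  have hQ_factor : fromCols S D * (fromCols S D)ᴴ = Q := by
    rw [conjTranspose_fromCols_eq_fromRows_conjTranspose, fromCols_mul_fromRows, ← hD,
      add_sub_cancel]
  rw [← hQ_factor, ← posDef_one_sub_conjTranspose_mul_mul_iff hv] at hQ
  have h_block : (1 - (fromCols S D)ᴴ * v * fromCols S D).submatrix Sum.inl Sum.inl =
      1 - Sᴴ * v * S := by
    rw [conjTranspose_fromCols_eq_fromRows_conjTranspose, fromRows_mul, fromRows_mul_fromCols,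
      ← fromBlocks_one, sub_eq_add_neg, fromBlocks_neg, fromBlocks_add, ← sub_eq_add_neg]
    rfl
  have h_posDef : (1 - Sᴴ * v * S).PosDef := h_block ▸ hQ.submatrix Sum.inl_injective
  rw [Matrix.mul_assoc, det_one_sub_mul_comm]
  exact h_posDef.det_pos.ne'

theorem sqrt_mul_conjTranspose_sqrt {A : Matrix n n 𝕜} (hA : 0 ≤ A) :
    CFC.sqrt A * (CFC.sqrt A)ᴴ = A := by
  rw [(CFC.sqrt_nonneg A).posSemidef.isHermitian.eq, CFC.sqrt_mul_sqrt_self A hA]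

theorem continuousOn_matrix_sqrt : ContinuousOn CFC.sqrt {A : Matrix n n 𝕜 | 0 ≤ A} := by
  let _ : NormedAlgebra ℝ (Matrix n n 𝕜) := ⟨fun r A => by
    rw [RCLike.real_smul_eq_coe_smul (K := 𝕜), norm_smul, RCLike.norm_ofReal, Real.norm_eq_abs]⟩
  exact CFC.continuousOn_sqrt

variable {α : Type*} [ConditionallyCompleteLinearOrder α] [DenselyOrdered α]
  [TopologicalSpace α] [OrderTopology α]

theorem posDef_one_sub_sqrt_mul_mul_sqrt {v : Matrix n n 𝕜} (hv : v.IsHermitian)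
    {P : α → Matrix n n 𝕜} {a b : α} (hab : a ≤ b) (hP_cont : ContinuousOn P (Set.Icc a b))
    (hP_nonneg : ∀ s ∈ Set.Icc a b, 0 ≤ P s) (hPa : P a = 0)
    (h_det : ∀ s ∈ Set.Icc a b, (1 - P s * v).det ≠ 0) :
    (1 - (CFC.sqrt (P b))ᴴ * v * CFC.sqrt (P b)).PosDef := by
  let G : α → Matrix n n 𝕜 := fun s => 1 - (CFC.sqrt (P s))ᴴ * v * CFC.sqrt (P s)
  have hG_path : IsPreconnected (G '' Set.Icc a b) := by
    have h_sqrt : ContinuousOn (fun s => CFC.sqrt (P s)) (Set.Icc a b) :=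
      continuousOn_matrix_sqrt.comp hP_cont hP_nonneg
    exact isPreconnected_Icc.image _ (by fun_prop)
  have hG_one : G a = 1 := by simp [G, hPa]
  have hG_herm : ∀ s, (G s).IsHermitian := fun s =>
    isHermitian_one.sub (isHermitian_conjTranspose_mul_mul _ hv)
  have hG_det : ∀ s ∈ Set.Icc a b, (G s).det ≠ 0 := fun s hs => by
    have h_comm : (G s).det = (1 - P s * v).det := by
      simp only [G]
      rw [Matrix.mul_assoc, det_one_sub_mul_comm, Matrix.mul_assoc,
        sqrt_mul_conjTranspose_sqrt (hP_nonneg s hs), det_one_sub_mul_comm]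
    exact h_comm ▸ h_det s hs
  exact posDef_of_mem_isPreconnected hG_path (Set.forall_mem_image.2 fun s _ => hG_herm s)
    (Set.forall_mem_image.2 hG_det) ⟨a, Set.left_mem_Icc.2 hab, hG_one⟩ .one
    ⟨b, Set.right_mem_Icc.2 hab, rfl⟩

theorem forall_det_one_sub_mul_ne_zero_iff_of_monotoneOn {v : Matrix n n 𝕜} (hv : v.IsHermitian)
    {P : α → Matrix n n 𝕜} {a b : α} (hab : a ≤ b) (hP_cont : ContinuousOn P (Set.Icc a b))
    (hP_mono : MonotoneOn P (Set.Icc a b)) (hPa : P a = 0) :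
    (∀ s ∈ Set.Icc a b, (1 - P s * v).det ≠ 0) ↔
      ∀ r ∈ Set.Icc (0 : ℝ) 1, (1 - r • (P b * v)).det ≠ 0 := by
  have ha : a ∈ Set.Icc a b := Set.left_mem_Icc.2 hab
  have hb : b ∈ Set.Icc a b := Set.right_mem_Icc.2 hab
  have hP_nonneg : ∀ s ∈ Set.Icc a b, 0 ≤ P s := fun s hs => hPa ▸ hP_mono ha hs hs.1
  refine ⟨fun h => ?_, fun h s hs =>
    det_one_sub_mul_ne_zero_of_le hv (hP_nonneg s hs) (hP_mono hs hb hs.2) h⟩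
  have h_posDef := posDef_one_sub_sqrt_mul_mul_sqrt hv hab hP_cont hP_nonneg hPa h
  rwa [posDef_one_sub_conjTranspose_mul_mul_iff hv,
    sqrt_mul_conjTranspose_sqrt (hP_nonneg b hb)] at h_posDef

end MatrixPaths

section QMat

open scoped MatrixOrder Matrix.Norms.L2Operator

variable {d : ℕ} (a b : Matrix (Fin d) (Fin d) ℝ)

/-- The integrand `exp(ub) aᵀa exp(ubᵀ)` of `qMat`, as a matrix-valued function of `u`. -/
noncomputable def qIntegrand (u : ℝ) : Matrix (Fin d) (Fin d) ℝ :=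
  NormedSpace.exp (u • b) * (aᵀ * a) * NormedSpace.exp (u • bᵀ)

theorem continuous_qIntegrand : Continuous (qIntegrand a b) := by
  have h_exp (c : Matrix (Fin d) (Fin d) ℝ) : Continuous fun u : ℝ => NormedSpace.exp (u • c) := by
    let _ := NormedAlgebra.restrictScalars ℚ ℝ (Matrix (Fin d) (Fin d) ℝ)
    exact NormedSpace.exp_continuous.comp (by fun_prop)
  exact ((h_exp b).mul continuous_const).mul (h_exp bᵀ)

theorem posSemidef_qIntegrand (u : ℝ) : (qIntegrand a b u).PosSemidef := by
  rw [qIntegrand, ← transpose_smul, exp_transpose]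
  simpa only [conjTranspose_eq_transpose_of_trivial] using
    (posSemidef_conjTranspose_mul_self a).mul_mul_conjTranspose_same (NormedSpace.exp (u • b))

theorem qMat_eq_intervalIntegral : qMat a b = fun s => ∫ u in (0 : ℝ)..s, qIntegrand a b u := by
  ext s i j
  exact (entryLinearMap ℝ ℝ i j).toContinuousLinearMap.intervalIntegral_comp_comm
    ((continuous_qIntegrand a b).intervalIntegrable 0 s)

theorem qMat_zero : qMat a b 0 = 0 := by
  simp only [qMat_eq_intervalIntegral, intervalIntegral.integral_same]

theorem continuous_qMat : Continuous (qMat a b) := by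
  rw [qMat_eq_intervalIntegral]
  exact intervalIntegral.continuous_primitive (continuous_qIntegrand a b).intervalIntegrable 0

theorem monotone_qMat : Monotone (qMat a b) := by
  rw [qMat_eq_intervalIntegral]
  exact monotone_intervalIntegral_of_posSemidef (continuous_qIntegrand a b).intervalIntegrable
    (posSemidef_qIntegrand a b) 0

theorem stmt_16_general {t : ℝ} (ht : 0 < t) {v : Matrix (Fin d) (Fin d) ℝ} (hv : v.IsSymm) :
    (∀ s ∈ Set.Icc (0:ℝ) t,
        ((1 : Matrix (Fin d) (Fin d) ℝ) - ((2:ℝ) * (s / t)) • (qMat a b t * v)).det ≠ 0) ↔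
      (∀ s ∈ Set.Icc (0:ℝ) t,
        ((1 : Matrix (Fin d) (Fin d) ℝ) - (2:ℝ) • (qMat a b s * v)).det ≠ 0) := by
  have hw : ((2 : ℝ) • v).IsHermitian :=
    .smul (by rwa [IsHermitian, conjTranspose_eq_transpose_of_trivial]) (.all 2)
  have h_criterion := forall_det_one_sub_mul_ne_zero_iff_of_monotoneOn hw ht.le
    (continuous_qMat a b).continuousOn ((monotone_qMat a b).monotoneOn _) (qMat_zero a b)
  simp only [Matrix.mul_smul, smul_smul] at h_criterion
  rw [h_criterion]
  refine ⟨fun h r hr => ?_, fun h s hs => ?_⟩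
  · have h_mem : r * t ∈ Set.Icc 0 t :=
      ⟨mul_nonneg hr.1 ht.le, mul_le_of_le_one_left ht.le hr.2⟩
    have h_r := h (r * t) h_mem
    rwa [mul_div_cancel_right₀ r ht.ne', mul_comm 2] at h_r
  · rw [mul_comm 2]
    exact h (s / t) ⟨div_nonneg hs.1 ht.le, (div_le_one ht).2 hs.2⟩

end QMat

/-- For `v` an invertible symmetric matrix and `t > 0`:
`det(I − 2 (s/t) q_t v) ≠ 0` for all `s ∈ [0,t]` iff `det(I − 2 q_s v) ≠ 0` for all
`s ∈ [0,t]`. -/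
theorem stmt_16 (d : ℕ) (a b : Matrix (Fin d) (Fin d) ℝ) (t : ℝ) (ht : 0 < t)
    (v : Matrix (Fin d) (Fin d) ℝ) (hv : v.IsSymm) (hvu : IsUnit v) :
    (∀ s ∈ Set.Icc (0:ℝ) t,
        ((1 : Matrix (Fin d) (Fin d) ℝ) - ((2:ℝ) * (s / t)) • (qMat a b t * v)).det ≠ 0) ↔
      (∀ s ∈ Set.Icc (0:ℝ) t,
        ((1 : Matrix (Fin d) (Fin d) ℝ) - (2:ℝ) • (qMat a b s * v)).det ≠ 0) := by
  exact stmt_16_general a b ht hv
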